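/- Let H and K be bialgebras over ℂ and let F ∈ (H⊗K)⊗(H⊗K) be a twist for the tensor product bialgebra H⊗K. Then the projection F_H = (id_H⊗ε_K⊗id_H⊗ε_K)(F) ∈ H⊗H is a twist for H, and the projection F_K = (ε_H⊗id_K⊗ε_H⊗id_K)(F) ∈ K⊗K is a twist for K. -/

import Mathlib

noncomputable section
namespace Kitaev

open TensorProduct LinearMap

/-- `F` is a twist (unitary 2-cocycle) for the bialgebra `B`: an invertible element of
`B ⊗ B` with `(ε ⊗ id)(F) = 1 = (id ⊗ ε)(F)` and
`F₁₂ · (Δ ⊗ id)(F) = F₂₃ · (id ⊗ Δ)(F)`. -/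
def IsTwist (B : Type) [Ring B] [Bialgebra ℂ B] (F : B ⊗[ℂ] B) : Prop :=
  IsUnit F ∧
  (TensorProduct.lid ℂ B).toLinearMap
      ((TensorProduct.map (Coalgebra.counit (R := ℂ)) LinearMap.id) F) = 1 ∧
  (TensorProduct.rid ℂ B).toLinearMap
      ((TensorProduct.map LinearMap.id (Coalgebra.counit (R := ℂ))) F) = 1 ∧
  (F ⊗ₜ (1 : B)) * ((TensorProduct.map (Coalgebra.comul (R := ℂ)) LinearMap.id) F) =
    ((TensorProduct.assoc ℂ B B B).symm ((1 : B) ⊗ₜ F)) *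
      ((TensorProduct.assoc ℂ B B B).symm
        ((TensorProduct.map LinearMap.id (Coalgebra.comul (R := ℂ))) F))

/-- The projection `id_H ⊗ ε_K : H ⊗ K →ₗ H`. -/
def projL (H K : Type) [Ring H] [Ring K] [Bialgebra ℂ H] [Bialgebra ℂ K] :
    H ⊗[ℂ] K →ₗ[ℂ] H :=
  (TensorProduct.rid ℂ H).toLinearMap ∘ₗ
    TensorProduct.map LinearMap.id (Coalgebra.counit (R := ℂ))

/-- The projection `ε_H ⊗ id_K : H ⊗ K →ₗ K`. -/
def projR (H K : Type) [Ring H] [Ring K] [Bialgebra ℂ H] [Bialgebra ℂ K] :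
    H ⊗[ℂ] K →ₗ[ℂ] K :=
  (TensorProduct.lid ℂ K).toLinearMap ∘ₗ
    TensorProduct.map (Coalgebra.counit (R := ℂ)) LinearMap.id

section Coalgebra

open Coalgebra (comul counit)

variable {R A B M N : Type*} [CommSemiring R]
  [AddCommMonoid A] [Module R A] [CoalgebraStruct R A]
  [AddCommMonoid B] [Module R B] [CoalgebraStruct R B]
  [AddCommMonoid M] [Module R M] [AddCommMonoid N] [Module R N]
  {F : Type*} [FunLike F A B] [CoalgHomClass F R A B] (f : F) (g : M →ₗ[R] N)

theorem lid_map_counit_id_map (x : A ⊗[R] M) :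
    TensorProduct.lid R N (TensorProduct.map counit LinearMap.id
        (TensorProduct.map (f : A →ₗ[R] B) g x)) =
      g (TensorProduct.lid R M (TensorProduct.map counit LinearMap.id x)) := by
  rw [TensorProduct.map_map, CoalgHomClass.counit_comp, LinearMap.id_comp]
  exact LinearMap.congr_fun (CoassocSimps.lid_comp_map counit g) x

theorem rid_map_id_counit_map (x : M ⊗[R] A) :
    TensorProduct.rid R N (TensorProduct.map LinearMap.id counit
        (TensorProduct.map g (f : A →ₗ[R] B) x)) =
      g (TensorProduct.rid R M (TensorProduct.map LinearMap.id counit x)) := by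
  rw [TensorProduct.map_map, CoalgHomClass.counit_comp, LinearMap.id_comp]
  exact LinearMap.congr_fun (CoassocSimps.rid_comp_map g counit) x

theorem map_comul_id_map (x : A ⊗[R] M) :
    TensorProduct.map comul LinearMap.id (TensorProduct.map (f : A →ₗ[R] B) g x) =
      TensorProduct.map (TensorProduct.map (f : A →ₗ[R] B) (f : A →ₗ[R] B)) g
        (TensorProduct.map comul LinearMap.id x) := by
  rw [TensorProduct.map_map, TensorProduct.map_map, CoalgHomClass.map_comp_comul,
    LinearMap.id_comp, LinearMap.comp_id]

theorem map_id_comul_map (x : M ⊗[R] A) :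
    TensorProduct.map LinearMap.id comul (TensorProduct.map g (f : A →ₗ[R] B) x) =
      TensorProduct.map g (TensorProduct.map (f : A →ₗ[R] B) (f : A →ₗ[R] B))
        (TensorProduct.map LinearMap.id comul x) := by
  rw [TensorProduct.map_map, TensorProduct.map_map, CoalgHomClass.map_comp_comul,
    LinearMap.id_comp, LinearMap.comp_id]

end Coalgebra

section Bialgebra

open Coalgebra (comul counit)

variable {R B C : Type*} [CommSemiring R] [Semiring B] [Bialgebra R B]
  [Semiring C] [Bialgebra R C]

variable (R) in
/-- The 2-cocycle identity `F₁₂ · (Δ ⊗ id)(F) = F₂₃ · (id ⊗ Δ)(F)`, with both sides bracketed as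
elements of `(B ⊗ B) ⊗ B`. -/
def IsTwoCocycle (F : B ⊗[R] B) : Prop :=
  (F ⊗ₜ (1 : B)) * TensorProduct.map comul LinearMap.id F =
    (TensorProduct.assoc R B B B).symm ((1 : B) ⊗ₜ F) *
      (TensorProduct.assoc R B B B).symm (TensorProduct.map LinearMap.id comul F)

variable (R) in
/-- Twists (unitary 2-cocycles) of a bialgebra over an arbitrary commutative semiring `R`,
extending `IsTwist` from `R = ℂ`. -/
structure IsTwistOver (F : B ⊗[R] B) : Prop where
  isUnit : IsUnit F
  lid_counit : TensorProduct.lid R B (TensorProduct.map counit LinearMap.id F) = 1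
  rid_counit : TensorProduct.rid R B (TensorProduct.map LinearMap.id counit F) = 1
  cocycle : IsTwoCocycle R F

theorem isTwist_iff_isTwistOver {B : Type} [Ring B] [Bialgebra ℂ B] {F : B ⊗[ℂ] B} :
    IsTwist B F ↔ IsTwistOver ℂ F :=
  ⟨fun ⟨hunit, hl, hr, hcocycle⟩ => ⟨hunit, hl, hr, hcocycle⟩,
    fun ⟨hunit, hl, hr, hcocycle⟩ => ⟨hunit, hl, hr, hcocycle⟩⟩

theorem IsTwoCocycle.map {F : B ⊗[R] B} (hF : IsTwoCocycle R F) (f : B →ₐc[R] C) :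
    IsTwoCocycle R (TensorProduct.map (f : B →ₗ[R] C) (f : B →ₗ[R] C) F) := by
  let f₂ : B ⊗[R] B →ₐ[R] C ⊗[R] C := Algebra.TensorProduct.map f f
  let f₃ : (B ⊗[R] B) ⊗[R] B →ₐ[R] (C ⊗[R] C) ⊗[R] C := Algebra.TensorProduct.map f₂ f
  have map_F₁₂ : f₃ (F ⊗ₜ 1) = f₂ F ⊗ₜ 1 := by
    rw [Algebra.TensorProduct.map_tmul, map_one]
  have map_F₂₃ : f₃ ((TensorProduct.assoc R B B B).symm (1 ⊗ₜ F)) =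
      (TensorProduct.assoc R C C C).symm (1 ⊗ₜ f₂ F) := by
    rw [← map_one (f : B →ₐ[R] C)]
    exact TensorProduct.map_map_assoc_symm ..
  have map_comul_left : f₃ (TensorProduct.map comul LinearMap.id F) =
      TensorProduct.map comul LinearMap.id (f₂ F) :=
    (map_comul_id_map f (f : B →ₗ[R] C) F).symm
  have map_comul_right : f₃ ((TensorProduct.assoc R B B B).symm
        (TensorProduct.map LinearMap.id comul F)) =
      (TensorProduct.assoc R C C C).symm
        (TensorProduct.map LinearMap.id comul (f₂ F)) :=
    (TensorProduct.map_map_assoc_symm ..).trans <|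
      congrArg _ (map_id_comul_map f (f : B →ₗ[R] C) F).symm
  calc
    (f₂ F ⊗ₜ 1) * TensorProduct.map comul LinearMap.id (f₂ F)
    _ = f₃ ((F ⊗ₜ 1) * TensorProduct.map comul LinearMap.id F) := by
      rw [map_mul, map_F₁₂, map_comul_left]
    _ = f₃ ((TensorProduct.assoc R B B B).symm (1 ⊗ₜ F) *
          (TensorProduct.assoc R B B B).symm (TensorProduct.map LinearMap.id comul F)) :=
      congrArg f₃ hF
    _ = (TensorProduct.assoc R C C C).symm (1 ⊗ₜ f₂ F) *
          (TensorProduct.assoc R C C C).symm (TensorProduct.map LinearMap.id comul (f₂ F)) := by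
      rw [map_mul, map_F₂₃, map_comul_right]

theorem IsTwistOver.map {F : B ⊗[R] B} (hF : IsTwistOver R F) (f : B →ₐc[R] C) :
    IsTwistOver R (TensorProduct.map (f : B →ₗ[R] C) (f : B →ₗ[R] C) F) where
  isUnit := hF.isUnit.map (Algebra.TensorProduct.map (f : B →ₐ[R] C) (f : B →ₐ[R] C))
  lid_counit := by
    rw [lid_map_counit_id_map f, hF.lid_counit]
    exact map_one f
  rid_counit := by
    rw [rid_map_id_counit_map f, hF.rid_counit]
    exact map_one f
  cocycle := hF.cocycle.map f

end Bialgebra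

section TensorProduct

variable (R H K : Type*) [CommSemiring R] [Semiring H] [Bialgebra R H]
  [Semiring K] [Bialgebra R K]

/-- The projection `id_H ⊗ ε_K : H ⊗ K → H` as a morphism of bialgebras. -/
def fstBialgHom : H ⊗[R] K →ₐc[R] H :=
  (Bialgebra.TensorProduct.rid R R H : H ⊗[R] R →ₐc[R] H).comp
    (Bialgebra.TensorProduct.map (BialgHom.id R H) (Bialgebra.counitBialgHom R K))

/-- The projection `ε_H ⊗ id_K : H ⊗ K → K` as a morphism of bialgebras. -/
def sndBialgHom : H ⊗[R] K →ₐc[R] K :=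
  (Bialgebra.TensorProduct.lid R K : R ⊗[R] K →ₐc[R] K).comp
    (Bialgebra.TensorProduct.map (Bialgebra.counitBialgHom R H) (BialgHom.id R K))

end TensorProduct

theorem coe_fstBialgHom_eq_projL (H K : Type) [Ring H] [Ring K] [Bialgebra ℂ H] [Bialgebra ℂ K] :
    (fstBialgHom ℂ H K : H ⊗[ℂ] K →ₗ[ℂ] H) = projL H K :=
  rfl

theorem coe_sndBialgHom_eq_projR (H K : Type) [Ring H] [Ring K] [Bialgebra ℂ H] [Bialgebra ℂ K] :
    (sndBialgHom ℂ H K : H ⊗[ℂ] K →ₗ[ℂ] K) = projR H K :=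
  rfl

theorem twist_projections_general {R H K : Type*} [CommSemiring R] [Semiring H] [Bialgebra R H]
    [Semiring K] [Bialgebra R K] {F : (H ⊗[R] K) ⊗[R] (H ⊗[R] K)} (hF : IsTwistOver R F) :
    IsTwistOver R (TensorProduct.map (fstBialgHom R H K : H ⊗[R] K →ₗ[R] H)
      (fstBialgHom R H K : H ⊗[R] K →ₗ[R] H) F) ∧
    IsTwistOver R (TensorProduct.map (sndBialgHom R H K : H ⊗[R] K →ₗ[R] K)
      (sndBialgHom R H K : H ⊗[R] K →ₗ[R] K) F) :=
  ⟨hF.map (fstBialgHom R H K), hF.map (sndBialgHom R H K)⟩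

/-- Let `H` and `K` be bialgebras over `ℂ` and let
`F ∈ (H ⊗ K) ⊗ (H ⊗ K)` be a twist for the tensor product bialgebra `H ⊗ K`. Then the
projection `F_H = (id_H ⊗ ε_K ⊗ id_H ⊗ ε_K)(F) ∈ H ⊗ H` is a twist for `H`, and the
projection `F_K = (ε_H ⊗ id_K ⊗ ε_H ⊗ id_K)(F) ∈ K ⊗ K` is a twist for `K`. -/
theorem twist_projections (H K : Type) [Ring H] [Ring K] [Bialgebra ℂ H] [Bialgebra ℂ K]
    (F : (H ⊗[ℂ] K) ⊗[ℂ] (H ⊗[ℂ] K)) (hF : IsTwist (H ⊗[ℂ] K) F) :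
    IsTwist H ((TensorProduct.map (projL H K) (projL H K)) F) ∧
    IsTwist K ((TensorProduct.map (projR H K) (projR H K)) F) := by
  rw [isTwist_iff_isTwistOver, isTwist_iff_isTwistOver, ← coe_fstBialgHom_eq_projL,
    ← coe_sndBialgHom_eq_projR]
  exact twist_projections_general (isTwist_iff_isTwistOver.mp hF)

end Kitaev
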